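/- Assume there exists a (λ,κ)-Luzin set in [0,1]^n (for uncountable cardinals κ ≤ λ and n ≥ 1). Then there exists an n-dimensional uniform Eberlein compact space K of weight λ such that every closed subspace L of K of weight ≥ κ has covering dimension n. In particular, K has no closed zero-dimensional subspace of weight ≥ κ. -/

import Mathlib

open scoped ENNReal

/-- `K` is uniform Eberlein compact: compact and embeddable into a Hilbert
space `ℓ₂(Γ)` with its weak topology. -/
def IsUniformEberlein (K : Type) [TopologicalSpace K] : Prop :=
  letI : Fact ((1 : ℝ≥0∞) ≤ 2) := ⟨one_le_two⟩
  CompactSpace K ∧ ∃ (Γ : Type)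
    (f : K → WeakSpace ℝ ↥(lp (fun _ : Γ => ℝ) 2)), Topology.IsEmbedding f

/-- A space is zero-dimensional if it has a base of clopen sets. -/
def IsZeroDim (X : Type*) [TopologicalSpace X] : Prop :=
  ∃ B : Set (Set X), (∀ U ∈ B, IsClopen U) ∧ TopologicalSpace.IsTopologicalBasis B

/-- The weight of a topological space: the least cardinality of a base. -/
noncomputable def tweight (X : Type*) [TopologicalSpace X] : Cardinal :=
  sInf {c | ∃ B : Set (Set X), TopologicalSpace.IsTopologicalBasis B ∧ Cardinal.mk B = c}

/-- Covering dimension `≤ n`: every finite open cover has an open shrinking of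
order at most `n + 1`. -/
def CovDimLE (X : Type*) [TopologicalSpace X] (n : ℕ) : Prop :=
  ∀ (m : ℕ) (U : Fin m → Set X), (∀ i, IsOpen (U i)) → (⋃ i, U i) = Set.univ →
    ∃ V : Fin m → Set X, (∀ i, IsOpen (V i) ∧ V i ⊆ U i) ∧ (⋃ i, V i) = Set.univ ∧
      ∀ x : X, Set.ncard {i | x ∈ V i} ≤ n + 1

/-- The covering dimension equals `n`. -/
def HasCovDim (X : Type*) [TopologicalSpace X] (n : ℕ) : Prop :=
  CovDimLE X n ∧ ∀ m : ℕ, CovDimLE X m → n ≤ m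

/-- The unit cube `[0,1]^n`. -/
abbrev Cube (n : ℕ) : Type := Fin n → ↥(Set.Icc (0 : ℝ) 1)

section
variable {ι : Type*} [DecidableEq ι]

/-- The iterated cubical cup product, modulo two, of the coboundaries of the functions in a list. -/
def cupCochain : List ((ι → ℕ) → ZMod 2) → Finset ι → (ι → ℕ) → ZMod 2
  | [], H, _ => if H = ∅ then 1 else 0
  | s :: l, H, x => ∑ d ∈ H, (s (x + Pi.single d 1) - s x) *
      cupCochain l (H.erase d) (x + Pi.single d 1)

/-- The cubical coboundary modulo two. -/
def cubicalCoboundary (η : Finset ι → (ι → ℕ) → ZMod 2) (H : Finset ι) (x : ι → ℕ) : ZMod 2 :=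
  ∑ d ∈ H, (η (H.erase d) (x + Pi.single d 1) - η (H.erase d) x)

lemma sum_sum_erase_eq_zero (H : Finset ι) (f : ι → ι → ZMod 2) (hf : ∀ d e, f d e = f e d) :
    ∑ d ∈ H, ∑ e ∈ H.erase d, f d e = 0 := by
  rw [Finset.sum_sigma']
  refine Finset.sum_involution (fun p _ => ⟨p.2, p.1⟩) ?_ ?_ ?_ ?_
  · rintro ⟨d, e⟩ _
    simp only [hf e d]
    exact CharTwo.add_self_eq_zero _
  · rintro ⟨d, e⟩ h _ heq
    simp only [Finset.mem_sigma, Finset.mem_erase] at h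
    simp only [Sigma.mk.injEq] at heq
    exact h.2.1 heq.1
  · rintro ⟨d, e⟩ h
    simp only [Finset.mem_sigma, Finset.mem_erase] at h ⊢
    exact ⟨h.2.2, h.2.1.symm, h.1⟩
  · rintro ⟨d, e⟩ _
    rfl

lemma cubicalCoboundary_cubicalCoboundary (η : Finset ι → (ι → ℕ) → ZMod 2)
    (H : Finset ι) (x : ι → ℕ) : cubicalCoboundary (cubicalCoboundary η) H x = 0 := by
  simp only [cubicalCoboundary, ← Finset.sum_sub_distrib]
  refine sum_sum_erase_eq_zero H (fun d e =>
    η ((H.erase d).erase e) (x + Pi.single d 1 + Pi.single e 1) -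
      η ((H.erase d).erase e) (x + Pi.single d 1) -
      (η ((H.erase d).erase e) (x + Pi.single e 1) - η ((H.erase d).erase e) x)) ?_
  intro d e
  simp only [Finset.erase_right_comm (a := d) (b := e),
    add_right_comm x (Pi.single d 1) (Pi.single e 1)]
  ring

lemma cubicalCoboundary_mul (s : (ι → ℕ) → ZMod 2) (l : List ((ι → ℕ) → ZMod 2))
    (H : Finset ι) (x : ι → ℕ) :
    cubicalCoboundary (fun H x => s x * cupCochain l H x) H x =
      cupCochain (s :: l) H x + s x * cubicalCoboundary (cupCochain l) H x := by
  simp only [cubicalCoboundary, cupCochain, Finset.mul_sum, ← Finset.sum_add_distrib]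
  exact Finset.sum_congr rfl fun d _ => by ring

lemma cubicalCoboundary_cupCochain (l : List ((ι → ℕ) → ZMod 2)) :
    cubicalCoboundary (cupCochain l) = 0 := by
  induction l with
  | nil => funext H x; simp [cubicalCoboundary, cupCochain]
  | cons s l ih =>
    have h : cupCochain (s :: l) = cubicalCoboundary (fun H x => s x * cupCochain l H x) := by
      funext H x
      simp [cubicalCoboundary_mul, ih]
    funext H x
    rw [h, cubicalCoboundary_cubicalCoboundary]
    rfl

lemma cupCochain_cons (s : (ι → ℕ) → ZMod 2) (l : List ((ι → ℕ) → ZMod 2)) :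
    cupCochain (s :: l) = cubicalCoboundary (fun H x => s x * cupCochain l H x) := by
  funext H x
  simp [cubicalCoboundary_mul, cubicalCoboundary_cupCochain]

lemma cupCochain_eq_zero {s : (ι → ℕ) → ZMod 2} {l : List ((ι → ℕ) → ZMod 2)} (hs : s ∈ l)
    {e : ι} {c : ℕ} {a : ZMod 2} (hc : ∀ y : ι → ℕ, y e = c → s y = a) {H : Finset ι}
    (he : e ∉ H) {x : ι → ℕ} (hx : x e = c) : cupCochain l H x = 0 := by
  induction l generalizing H x with
  | nil => simp at hs
  | cons t l ih =>
    refine Finset.sum_eq_zero fun d hd => ?_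
    have hde : e ≠ d := fun h => he (h ▸ hd)
    have hx' : (x + Pi.single d 1 : ι → ℕ) e = c := by simp [hx, hde]
    rcases List.mem_cons.1 hs with rfl | hs
    · rw [hc _ hx, hc _ hx', sub_self, zero_mul]
    · rw [ih hs (fun h => he (Finset.mem_of_mem_erase h)) hx', mul_zero]

lemma exists_ne_of_cupCochain_ne_zero {l : List ((ι → ℕ) → ZMod 2)} {H : Finset ι} {x : ι → ℕ}
    (h : cupCochain l H x ≠ 0) {s : (ι → ℕ) → ZMod 2} (hs : s ∈ l) :
    ∃ y z : ι → ℕ, (∀ i, x i ≤ y i ∧ y i ≤ x i + 1) ∧ (∀ i, x i ≤ z i ∧ z i ≤ x i + 1) ∧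
      s y ≠ s z := by
  suffices h' : ∃ y z : ι → ℕ, (∀ i, x i ≤ y i ∧ y i ≤ x i + if i ∈ H then 1 else 0) ∧
      (∀ i, x i ≤ z i ∧ z i ≤ x i + if i ∈ H then 1 else 0) ∧ s y ≠ s z by
    obtain ⟨y, z, hy, hz, hyz⟩ := h'
    refine ⟨y, z, fun i => ⟨(hy i).1, (hy i).2.trans ?_⟩,
      fun i => ⟨(hz i).1, (hz i).2.trans ?_⟩, hyz⟩ <;> split_ifs <;> omega
  induction l generalizing H x with
  | nil => simp at hs
  | cons t l ih =>
    obtain ⟨d, hd, hne⟩ := Finset.exists_ne_zero_of_sum_ne_zero h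
    have key : ∀ y : ι → ℕ, (∀ i, (x + Pi.single d 1 : ι → ℕ) i ≤ y i ∧
        y i ≤ (x + Pi.single d 1 : ι → ℕ) i + if i ∈ H.erase d then 1 else 0) →
        ∀ i, x i ≤ y i ∧ y i ≤ x i + if i ∈ H then 1 else 0 := by
      intro y hy i
      have := hy i
      by_cases hid : i = d
      · subst hid
        simp only [Pi.add_apply, Pi.single_eq_same, Finset.mem_erase, ne_eq, not_true_eq_false,
          false_and, if_false] at this
        simp only [hd, if_true]
        omega
      · simpa [hid] using this
    rcases List.mem_cons.1 hs with rfl | hs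
    · refine ⟨x + Pi.single d 1, x, key _ fun i => ⟨le_rfl, Nat.le_add_right _ _⟩,
        fun i => ⟨le_rfl, Nat.le_add_right _ _⟩, ?_⟩
      exact fun h => left_ne_zero_of_mul hne (sub_eq_zero.2 h)
    · obtain ⟨y, z, hy, hz, hyz⟩ := ih (right_ne_zero_of_mul hne) hs
      exact ⟨y, z, key y hy, key z hz, hyz⟩

variable [Fintype ι]

/-- The lattice points with coordinates below `N` in the directions `H`, and equal to those of
`x₀` in the other directions. -/
def latticeBox (N : ℕ) (H : Finset ι) (x₀ : ι → ℕ) : Finset (ι → ℕ) :=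
  Fintype.piFinset fun i => if i ∈ H then Finset.range N else {x₀ i}

lemma mem_latticeBox {N : ℕ} {H : Finset ι} {x₀ x : ι → ℕ} :
    x ∈ latticeBox N H x₀ ↔ ∀ i, if i ∈ H then x i < N else x i = x₀ i := by
  rw [latticeBox, Fintype.mem_piFinset]
  refine forall_congr' fun i => ?_
  split_ifs <;> simp

lemma sum_latticeBox {N : ℕ} {H : Finset ι} {d : ι} (hd : d ∈ H) (x₀ : ι → ℕ)
    (F : (ι → ℕ) → ZMod 2) :
    ∑ x ∈ latticeBox N H x₀, F x =
      ∑ x ∈ latticeBox N (H.erase d) x₀, ∑ j ∈ Finset.range N, F (Function.update x d j) := by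
  rw [← Finset.sum_product']
  symm
  refine Finset.sum_nbij' (fun p => Function.update p.1 d p.2)
    (fun y => (Function.update y d (x₀ d), y d)) ?_ ?_ ?_ ?_ ?_
  · rintro ⟨x, j⟩ h
    simp only [Finset.mem_product, mem_latticeBox, Finset.mem_range] at h ⊢
    intro i
    by_cases hid : i = d
    · subst hid; simpa [hd] using h.2
    · simpa [hid] using h.1 i
  · intro y h
    simp only [Finset.mem_product, mem_latticeBox, Finset.mem_range] at h ⊢
    refine ⟨fun i => ?_, by simpa [hd] using h d⟩
    by_cases hid : i = d
    · subst hid; simp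
    · simpa [hid] using h i
  · rintro ⟨x, j⟩ h
    simp only [Finset.mem_product, mem_latticeBox, Finset.mem_range] at h
    have := h.1 d
    simp only [Finset.mem_erase, ne_eq, not_true_eq_false, false_and, if_false] at this
    simp [← this]
  · intro y _
    simp
  · intro p _
    rfl

lemma sum_latticeBox_cubicalCoboundary (N : ℕ) (η : Finset ι → (ι → ℕ) → ZMod 2) (H : Finset ι)
    (x₀ : ι → ℕ) :
    ∑ x ∈ latticeBox N H x₀, cubicalCoboundary η H x =
      ∑ d ∈ H, ∑ x ∈ latticeBox N (H.erase d) x₀,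
        (η (H.erase d) (Function.update x d N) - η (H.erase d) (Function.update x d 0)) := by
  simp only [cubicalCoboundary]
  rw [Finset.sum_comm]
  refine Finset.sum_congr rfl fun d hd => ?_
  rw [sum_latticeBox hd]
  refine Finset.sum_congr rfl fun x _ => ?_
  rw [← Finset.sum_range_sub (fun j => η (H.erase d) (Function.update x d j)) N]
  refine Finset.sum_congr rfl fun j _ => ?_
  congr 2
  funext i
  by_cases hid : i = d
  · subst hid; simp
  · simp [hid]

lemma sum_cupCochain_eq_one (N : ℕ) (s : ι → (ι → ℕ) → ZMod 2)
    (h0 : ∀ i x, x i = 0 → s i x = 0) (h1 : ∀ i x, x i = N → s i x = 1)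
    (l : List ι) (hl : l.Nodup) (x₀ : ι → ℕ) :
    ∑ x ∈ latticeBox N l.toFinset x₀, cupCochain (l.map s) l.toFinset x = 1 := by
  induction l generalizing x₀ with
  | nil => simp [cupCochain, latticeBox, Fintype.piFinset_singleton]
  | cons d l ih =>
    obtain ⟨hdl, hl⟩ := List.nodup_cons.1 hl
    have herase : (d :: l).toFinset.erase d = l.toFinset := by
      simp [hdl]
    rw [List.map_cons, cupCochain_cons, sum_latticeBox_cubicalCoboundary,
      Finset.sum_eq_single_of_mem d (by simp)]
    · rw [herase]
      have hsimp : ∀ x : ι → ℕ,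
          s d (Function.update x d N) *
              cupCochain (l.map s) l.toFinset (Function.update x d N) -
            s d (Function.update x d 0) *
              cupCochain (l.map s) l.toFinset (Function.update x d 0) =
          cupCochain (l.map s) l.toFinset (Function.update x d N) := by
        intro x
        rw [h1 d _ (by simp), h0 d _ (by simp)]
        ring
      simp only [hsimp]
      rw [← ih hl (Function.update x₀ d N)]
      refine Finset.sum_nbij' (fun x => Function.update x d N)
        (fun x => Function.update x d (x₀ d)) ?_ ?_ ?_ ?_ ?_
      · intro x hx
        rw [mem_latticeBox] at hx ⊢
        intro i
        by_cases hid : i = d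
        · subst hid; simp [hdl]
        · simpa [hid] using hx i
      · intro x hx
        rw [mem_latticeBox] at hx ⊢
        intro i
        by_cases hid : i = d
        · subst hid; simp [hdl]
        · simpa [hid] using hx i
      · intro x hx
        have := mem_latticeBox.1 hx d
        simp only [List.mem_toFinset, hdl, if_false] at this
        simp [← this]
      · intro x hx
        have := mem_latticeBox.1 hx d
        simp only [List.mem_toFinset, hdl, if_false, Function.update_self] at this
        simp [← this]
      · intro x _
        rfl
    · intro e he hed
      refine Finset.sum_eq_zero fun x _ => ?_
      have hel : e ∈ l := by simpa [hed] using he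
      have hmem : s e ∈ l.map s := List.mem_map_of_mem hel
      rw [cupCochain_eq_zero hmem (h1 e) (Finset.notMem_erase _ _) (by simp),
        cupCochain_eq_zero hmem (h0 e) (Finset.notMem_erase _ _) (by simp)]
      ring

/-- A discrete form of the Poincaré–Miranda theorem. -/
lemma exists_cell_forall_ne (N : ℕ) (s : ι → (ι → ℕ) → ZMod 2)
    (h0 : ∀ i x, x i = 0 → s i x = 0) (h1 : ∀ i x, x i = N → s i x = 1) :
    ∃ x : ι → ℕ, (∀ i, x i < N) ∧ ∀ i, ∃ y z : ι → ℕ, (∀ j, x j ≤ y j ∧ y j ≤ x j + 1) ∧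
      (∀ j, x j ≤ z j ∧ z j ≤ x j + 1) ∧ s i y ≠ s i z := by
  have h := sum_cupCochain_eq_one N s h0 h1 Finset.univ.toList (Finset.nodup_toList _) 0
  obtain ⟨x, hx, hne⟩ := Finset.exists_ne_zero_of_sum_ne_zero (h.trans_ne one_ne_zero)
  refine ⟨x, fun i => by simpa using mem_latticeBox.1 hx i, fun i => ?_⟩
  exact exists_ne_of_cupCochain_ne_zero hne (List.mem_map_of_mem (by simp))

end

/-- The Poincaré–Miranda theorem. -/
lemma poincare_miranda {n : ℕ} (g : Cube n → Fin n → ℝ) (hg : Continuous g)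
    (h0 : ∀ x i, x i = 0 → g x i < 0) (h1 : ∀ x i, x i = 1 → 0 < g x i) : ∃ x, g x = 0 := by
  by_contra! hne
  obtain ⟨x₀, -, hx₀⟩ := isCompact_univ.exists_isMinOn Set.univ_nonempty hg.norm.continuousOn
  have hε : 0 < ‖g x₀‖ := norm_pos_iff.2 (hne x₀)
  obtain ⟨δ, hδ, huc⟩ := Metric.uniformContinuous_iff.1
    (CompactSpace.uniformContinuous_of_continuous hg) _ hε
  obtain ⟨N, hN⟩ := exists_nat_one_div_lt hδ
  have hN0 : (0 : ℝ) < (N + 1 : ℕ) := by positivity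
  set p : (Fin n → ℕ) → Cube n := fun y i =>
    Set.projIcc (0 : ℝ) 1 zero_le_one (y i / (N + 1 : ℕ)) with hp
  have hdist : ∀ x y : Fin n → ℕ, (∀ j, x j ≤ y j ∧ y j ≤ x j + 1) → dist (p y) (p x) < δ := by
    intro x y hxy
    refine (dist_pi_lt_iff hδ).2 fun j => lt_of_le_of_lt ?_ hN
    have hle : dist (p y j) (p x j) ≤ |(y j : ℝ) / (N + 1 : ℕ) - x j / (N + 1 : ℕ)| :=
      Set.abs_projIcc_sub_projIcc zero_le_one
    refine hle.trans ?_
    have h2 : (x j : ℝ) ≤ y j := by exact_mod_cast (hxy j).1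
    have h3 : (y j : ℝ) ≤ x j + 1 := by exact_mod_cast (hxy j).2
    rw [← sub_div, abs_div, abs_of_nonneg (sub_nonneg.2 h2), abs_of_pos hN0]
    push_cast
    gcongr
    linarith
  classical
  obtain ⟨x, -, hx⟩ := exists_cell_forall_ne (N + 1)
    (fun i y => if g (p y) i < 0 then 0 else 1)
    (fun i y hy => if_pos (h0 _ _ (by simp [hp, hy])))
    (fun i y hy => if_neg (not_lt.2 (h1 _ _ (by
      simp only [hp, hy, div_self hN0.ne']
      exact Set.projIcc_right (h := zero_le_one' ℝ))).le))
  refine absurd (hx₀ (Set.mem_univ (p x))) (not_le.2 ((pi_norm_lt_iff hε).2 fun i => ?_))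
  have hnear : ∀ y, (∀ j, x j ≤ y j ∧ y j ≤ x j + 1) → |g (p y) i - g (p x) i| < ‖g x₀‖ :=
    fun y hy => (dist_le_pi_dist (g (p y)) (g (p x)) i).trans_lt (huc (hdist x y hy))
  have key : ∀ y z, (∀ j, x j ≤ y j ∧ y j ≤ x j + 1) → (∀ j, x j ≤ z j ∧ z j ≤ x j + 1) →
      g (p y) i < 0 → ¬ g (p z) i < 0 → ‖g (p x) i‖ < ‖g x₀‖ := by
    intro y z hy hz hyn hzn
    have hy' := abs_lt.1 (hnear y hy)
    have hz' := abs_lt.1 (hnear z hz)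
    rw [Real.norm_eq_abs, abs_lt]
    constructor <;> linarith
  obtain ⟨y, z, hy, hz, hyz⟩ := hx i
  by_cases hyn : g (p y) i < 0 <;> by_cases hzn : g (p z) i < 0
  · simp [hyn, hzn] at hyz
  · exact key y z hy hz hyn hzn
  · exact key z y hz hy hzn hyn
  · simp [hyn, hzn] at hyz

/-- If no member of a finite open cover of the cube meets two opposite faces, then some point
lies in more than `n` members of the cover. -/
lemma exists_lt_ncard_of_cover {n M : ℕ} (V : Fin M → Set (Cube n)) (hV : ∀ j, IsOpen (V j))
    (hcov : ⋃ j, V j = Set.univ)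
    (hface : ∀ j i, ∀ x ∈ V j, ∀ y ∈ V j, x i = 0 → y i ≠ 1) :
    ∃ x, n < Set.ncard {j | x ∈ V j} := by
  classical
  obtain ⟨F, hFcov, hFcl, hFV⟩ :=
    exists_iUnion_eq_closed_subset hV (fun _ => Set.toFinite _) hcov
  have hf : ∀ j, ∃ f : C(Cube n, ℝ), Set.EqOn f 0 (F j) ∧ Set.EqOn f 1 (V j)ᶜ ∧
      ∀ x, f x ∈ Set.Icc (0 : ℝ) 1 := fun j =>
    exists_continuous_zero_one_of_isClosed (hFcl j) (hV j).isClosed_compl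
      (Set.disjoint_compl_right_iff_subset.2 (hFV j))
  choose f hf0 hf1 _ using hf
  set t : Fin n → ℝ := fun i => (i + 1) / (n + 1) with ht
  have ht0 : ∀ i, 0 < t i := fun i => by positivity
  have ht1 : ∀ i, t i < 1 := fun i => by
    rw [ht, div_lt_one (by positivity)]
    exact_mod_cast Nat.succ_lt_succ i.2
  have htinj : Function.Injective t := fun i k h => by
    rw [ht] at h
    have h' := (div_left_inj' (by positivity)).1 h
    exact Fin.ext (by exact_mod_cast add_right_cancel h')
  set J : Fin n → Finset (Fin M) := fun i => {j | ∃ x ∈ V j, x i = 0} with hJ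
  have hmemF : ∀ x, ∃ j, x ∈ F j := fun x => Set.mem_iUnion.1 (hFcov ▸ Set.mem_univ x)
  have hJne : ∀ i, (J i).Nonempty := fun i => by
    obtain ⟨j, hj⟩ := hmemF 0
    exact ⟨j, by simpa [hJ] using ⟨_, hFV j hj, rfl⟩⟩
  obtain ⟨x, hx⟩ := poincare_miranda
    (fun x i => (J i).inf' (hJne i) fun j => f j x - t i)
    (continuous_pi fun i => Continuous.finset_inf'_apply _ fun j _ => by fun_prop)
    (fun x i hxi => by
      obtain ⟨j, hj⟩ := hmemF x
      refine (Finset.inf'_lt_iff _).2 ⟨j, by simpa [hJ] using ⟨x, hFV j hj, hxi⟩, ?_⟩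
      rw [hf0 j hj]
      simpa using ht0 i)
    (fun x i hxi => by
      refine (Finset.lt_inf'_iff _).2 fun j hj => ?_
      obtain ⟨y, hy, hyi⟩ : ∃ y ∈ V j, y i = 0 := by simpa [hJ] using hj
      rw [hf1 j fun hxV => hface j i y hy x hxV hyi hxi]
      simpa using ht1 i)
  have hsel : ∀ i, ∃ j, f j x = t i := fun i => by
    obtain ⟨j, -, hj⟩ := Finset.exists_mem_eq_inf' (hJne i) fun j => f j x - t i
    exact ⟨j, sub_eq_zero.1 (hj.symm.trans (congrFun hx i))⟩
  choose σ hσ using hsel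
  obtain ⟨j₀, hj₀⟩ := hmemF x
  have hσinj : Function.Injective σ := fun i k h => htinj (by rw [← hσ, ← hσ, h])
  have hj₀σ : j₀ ∉ Set.range σ := by
    rintro ⟨i, rfl⟩
    have := hf0 _ hj₀
    rw [hσ] at this
    exact (ht0 i).ne' this
  refine ⟨x, ?_⟩
  have hsub : insert j₀ (Set.range σ) ⊆ {j | x ∈ V j} := by
    rintro j (rfl | ⟨i, rfl⟩)
    · exact hFV _ hj₀
    · by_contra hxV
      have := hf1 (σ i) hxV
      rw [hσ] at this
      exact (ht1 i).ne this
  calc n < (insert j₀ (Set.range σ)).ncard := by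
        rw [Set.ncard_insert_of_notMem hj₀σ (Set.toFinite _), Set.ncard_range_of_injective hσinj]
        simp
    _ ≤ _ := Set.ncard_le_ncard hsub (Set.toFinite _)

lemma le_of_covDimLE_cube {n m : ℕ} (h : CovDimLE (Cube n) m) : n ≤ m := by
  classical
  set e := Fintype.equivFin (Fin n → Bool)
  set U : (Fin n → Bool) → Set (Cube n) := fun b => {x | ∀ i, x i ≠ if b i then 0 else 1} with hU
  have hUo : ∀ b, IsOpen (U b) := fun b => by
    simp only [hU, Set.ofPred_forall]
    exact isOpen_iInter_of_finite fun i => isOpen_ne_fun (continuous_apply i) continuous_const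
  have hUc : (⋃ k, U (e.symm k)) = Set.univ := by
    refine Set.eq_univ_of_forall fun x => Set.mem_iUnion.2 ⟨e fun i => decide (x i ≠ 0), ?_⟩
    intro i
    by_cases hx : x i = 0 <;> simp [hx]
  obtain ⟨V, hV, hVc, hVn⟩ := h _ (fun k => U (e.symm k)) (fun k => hUo _) hUc
  obtain ⟨x, hx⟩ := exists_lt_ncard_of_cover V (fun j => (hV j).1) hVc
    (fun j i x hx y hy hxi hyi => by
      have h1 := (hV j).2 hx i
      have h2 := (hV j).2 hy i
      rw [hxi] at h1
      rw [hyi] at h2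
      cases hb : e.symm j i <;> simp [hb] at h1 h2)
  have := hVn x
  omega

lemma CovDimLE.of_isClosedEmbedding {X Y : Type*} [TopologicalSpace X] [TopologicalSpace Y]
    {f : Y → X} (hf : Topology.IsClosedEmbedding f) {m : ℕ} (h : CovDimLE X m) :
    CovDimLE Y m := by
  intro k U hU hcov
  rcases Nat.eq_zero_or_pos k with rfl | hk
  · exact ⟨U, fun i => i.elim0, hcov, fun x => by simp [Set.eq_empty_of_isEmpty]⟩
  choose W hWo hWU using fun i => hf.isInducing.isOpen_iff.1 (hU i)
  obtain ⟨V, hV, hVc, hVn⟩ := h k (fun i => W i ∪ (Set.range f)ᶜ)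
    (fun i => (hWo i).union hf.isClosed_range.isOpen_compl) (by
      refine Set.eq_univ_of_forall fun x => Set.mem_iUnion.2 ?_
      by_cases hx : x ∈ Set.range f
      · obtain ⟨y, rfl⟩ := hx
        obtain ⟨i, hi⟩ := Set.mem_iUnion.1 (hcov ▸ Set.mem_univ y)
        rw [← hWU i] at hi
        exact ⟨i, Or.inl hi⟩
      · exact ⟨⟨0, hk⟩, Or.inr hx⟩)
  refine ⟨fun i => f ⁻¹' V i, fun i => ⟨(hV i).1.preimage hf.continuous, fun y hy => ?_⟩, ?_,
    fun y => hVn (f y)⟩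
  · rw [← hWU i]
    exact ((hV i).2 hy).resolve_right (not_not_intro ⟨y, rfl⟩)
  · rw [← Set.preimage_iUnion, hVc, Set.preimage_univ]

lemma covDimLE_cube (n : ℕ) : CovDimLE (Cube n) n := by
  intro m U hU hcov
  obtain ⟨δ, hδ, hball⟩ := lebesgue_number_lemma_of_metric isCompact_univ hU hcov.ge
  obtain ⟨N, hN⟩ := exists_nat_one_div_lt hδ
  have hN0 : (0 : ℝ) < N + 1 := by positivity
  set ℓ : Fin (n + 1) → Cube n → Fin n → ℝ := fun k x i =>
    (N + 1) * (x i : ℝ) - k / (n + 1) with hℓ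
  set Q : Fin (n + 1) → (Fin n → ℤ) → Set (Cube n) := fun k c =>
    {x | ∀ i, c i < ℓ k x i ∧ ℓ k x i < c i + 1} with hQ
  have hQo : ∀ k c, IsOpen (Q k c) := fun k c => by
    simp only [hQ, hℓ, Set.ofPred_forall]
    exact isOpen_iInter_of_finite fun i =>
      (isOpen_lt (f := fun _ => (c i : ℝ)) (by fun_prop) (by fun_prop)).and
        (isOpen_lt (g := fun _ => (c i + 1 : ℝ)) (by fun_prop) (by fun_prop))
  have hQfloor : ∀ k c, ∀ x ∈ Q k c, c = fun i => ⌊ℓ k x i⌋ := fun k c x hx =>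
    funext fun i => (Int.floor_eq_iff.2 ⟨(hx i).1.le, (hx i).2⟩).symm
  have hQU : ∀ k c, ∃ j, Q k c ⊆ U j := by
    intro k c
    rcases (Q k c).eq_empty_or_nonempty with h | ⟨x, hx⟩
    · obtain ⟨j, -⟩ := hball 0 trivial
      exact ⟨j, h ▸ Set.empty_subset _⟩
    · obtain ⟨j, hj⟩ := hball x trivial
      refine ⟨j, fun y hy => hj ?_⟩
      refine (dist_pi_lt_iff hδ).2 fun i => lt_trans ?_ hN
      have hx' := hx i
      have hy' := hy i
      simp only [hℓ] at hx' hy'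
      rw [Subtype.dist_eq, Real.dist_eq, abs_lt, ← neg_div, div_lt_iff₀ hN0, lt_div_iff₀ hN0]
      constructor <;> linarith
  choose r hr using hQU
  refine ⟨fun j => ⋃ k, ⋃ c, ⋃ (_ : r k c = j), Q k c, fun j => ⟨?_, ?_⟩, ?_, fun x => ?_⟩
  · exact isOpen_iUnion fun k => isOpen_iUnion fun c => isOpen_iUnion fun _ => hQo k c
  · refine Set.iUnion_subset fun k => Set.iUnion_subset fun c => Set.iUnion_subset ?_
    rintro rfl
    exact hr k c
  · refine Set.eq_univ_of_forall fun x => ?_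
    suffices h : ∃ k, x ∈ Q k fun i => ⌊ℓ k x i⌋ by
      obtain ⟨k, hk⟩ := h
      simp only [Set.mem_iUnion]
      exact ⟨_, k, _, rfl, hk⟩
    by_contra! h
    have hint : ∀ k, ∃ i, (⌊ℓ k x i⌋ : ℝ) = ℓ k x i := fun k => by
      by_contra! hk
      exact h k fun i => ⟨lt_of_le_of_ne (Int.floor_le _) (hk i), Int.lt_floor_add_one _⟩
    choose i hi using hint
    obtain ⟨k, k', hkk', hii⟩ := Fintype.exists_ne_map_eq_of_card_lt i (by simp)
    have hn0 : (n : ℝ) + 1 ≠ 0 := by positivity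
    have h1 : ((⌊ℓ k x (i k)⌋ - ⌊ℓ k' x (i k')⌋ : ℤ) : ℝ) * (n + 1) = k' - k := by
      push_cast
      rw [hi k, hi k', hii]
      simp only [hℓ]
      field_simp
      ring
    have h2 : (⌊ℓ k x (i k)⌋ - ⌊ℓ k' x (i k')⌋) * ((n : ℤ) + 1) = (k' : ℤ) - k := by
      exact_mod_cast h1
    have hk := k.2
    have hk' := k'.2
    have hz : (k' : ℤ) - k = 0 :=
      Int.eq_zero_of_abs_lt_dvd ⟨_, (mul_comm _ _).trans h2 |>.symm⟩ (by rw [abs_lt]; omega)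
    exact hkk' (Fin.ext (by omega))
  · have hsub : {j | x ∈ ⋃ k, ⋃ c, ⋃ (_ : r k c = j), Q k c} ⊆
        Set.range fun k => r k fun i => ⌊ℓ k x i⌋ := by
      intro j hj
      simp only [Set.mem_ofPred_eq, Set.mem_iUnion] at hj
      obtain ⟨k, c, rfl, hx⟩ := hj
      exact ⟨k, congrArg (r k) (hQfloor k c x hx).symm⟩
    refine (Set.ncard_le_ncard hsub (Set.toFinite _)).trans ?_
    rw [← Set.image_univ]
    refine (Set.ncard_image_le (Set.toFinite _)).trans ?_
    simp

lemma lp_sum_apply {Γ ι : Type*} (s : Finset ι) (f : ι → lp (fun _ : Γ => ℝ) 2) (c : Γ) :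
    (∑ i ∈ s, f i) c = ∑ i ∈ s, f i c := by
  rw [lp.coeFn_sum]
  exact Finset.sum_apply _ _ _

/-- The Aleksandrov duplicate of the cube with the isolated points outside `X` removed: the
point `(y, f)` with `f = 0` is the non-isolated copy of `y`, and the point `(x, f)` with
`f` the indicator function of `x ∈ X` is the isolated copy of `x`. -/
def partialDuplicate {n : ℕ} (X : Set (Cube n)) : Set (Cube n × (X → Bool)) :=
  {p | ∀ x, p.2 x = true → p.1 = x}

namespace partialDuplicate

variable {n : ℕ} {X : Set (Cube n)}

lemma isClosed : IsClosed (partialDuplicate X) := by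
  simp only [partialDuplicate, Set.ofPred_forall]
  refine isClosed_iInter fun x => isClosed_imp ?_ (isClosed_eq continuous_fst continuous_const)
  exact (isOpen_discrete {true}).preimage
    ((continuous_apply x).comp continuous_snd : Continuous fun p : Cube n × (X → Bool) => p.2 x)

instance : CompactSpace (partialDuplicate X) :=
  isCompact_iff_compactSpace.1 isClosed.isCompact

/-- The non-isolated copy of a point of the cube. -/
def base (y : Cube n) : partialDuplicate X :=
  ⟨(y, fun _ => false), fun _ h => absurd h Bool.false_ne_true⟩

lemma continuous_base : Continuous (base : Cube n → partialDuplicate X) :=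
  Continuous.subtype_mk (by fun_prop) _

lemma base_injective : Function.Injective (base : Cube n → partialDuplicate X) :=
  fun _ _ h => congrArg (fun p => p.1.1) h

open Classical in
/-- The isolated copy of a point of `X`. -/
noncomputable def iso (x : X) : partialDuplicate X :=
  ⟨(x, fun y => decide (y = x)), fun _ h => congrArg Subtype.val (of_decide_eq_true h).symm⟩

lemma eq_iso {p : partialDuplicate X} {x : X} (h : p.1.2 x = true) : p = iso x := by
  refine Subtype.ext (Prod.ext (p.2 x h : p.1.1 = x) (funext fun y => ?_))
  by_cases hy : y = x
  · subst hy
    simpa [iso] using h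
  · have : p.1.2 y ≠ true := fun h' => hy (Subtype.ext ((p.2 y h').symm.trans (p.2 x h)))
    simpa [iso, hy] using this

lemma snd_iso (x : X) : (iso x).1.2 x = true := by simp [iso]

lemma eq_base_or_eq_iso (p : partialDuplicate X) : p = base p.1.1 ∨ ∃ x, p = iso x := by
  by_cases h : ∃ x, p.1.2 x = true
  · obtain ⟨x, hx⟩ := h
    exact Or.inr ⟨x, eq_iso hx⟩
  · push Not at h
    exact Or.inl (Subtype.ext (Prod.ext rfl (funext fun x => by simpa [base] using h x)))

lemma iso_injective : Function.Injective (iso : X → partialDuplicate X) :=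
  fun _ _ h => Subtype.ext (congrArg (fun p : partialDuplicate X => p.1.1) h)

lemma isOpen_singleton_iso (x : X) : IsOpen {iso x} := by
  have h : ({iso x} : Set (partialDuplicate X)) = (fun p => p.1.2 x) ⁻¹' {true} := by
    ext p
    exact ⟨fun h => by rw [Set.mem_singleton_iff.1 h]; exact snd_iso x, fun h => eq_iso h⟩
  rw [h]
  exact (isOpen_discrete {true}).preimage (by fun_prop)

lemma tendsto_iso (y : Cube n) :
    Filter.Tendsto iso (Filter.comap (fun x : X => (x : Cube n)) (nhdsWithin y {y}ᶜ))
      (nhds (base y : partialDuplicate X)) := by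
  refine tendsto_subtype_rng.2 (Filter.Tendsto.prodMk_nhds ?_ (tendsto_pi_nhds.2 fun z => ?_))
  · exact Filter.tendsto_comap.mono_right nhdsWithin_le_nhds
  · refine tendsto_const_nhds.congr' ?_
    have hz : ∀ᶠ x in nhdsWithin y {y}ᶜ, x ≠ (z : Cube n) := by
      by_cases hzy : (z : Cube n) = y
      · rw [hzy]
        exact eventually_mem_nhdsWithin
      · exact nhdsWithin_le_nhds (isOpen_ne.mem_nhds (Ne.symm hzy))
    filter_upwards [hz.comap (fun x : X => (x : Cube n))] with x hx
    exact (decide_eq_false fun h => hx (congrArg _ h.symm)).symm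

lemma covDimLE : CovDimLE (partialDuplicate X) n := by
  intro m U hU hcov
  have hmem : ∀ p, ∃ i, p ∈ U i := fun p => Set.mem_iUnion.1 (hcov ▸ Set.mem_univ p)
  obtain ⟨V, hV, hVc, hVn⟩ := covDimLE_cube n m (fun i => base ⁻¹' U i)
    (fun i => (hU i).preimage continuous_base) (by
      rw [← Set.preimage_iUnion, hcov, Set.preimage_univ])
  choose a ha using hmem
  set W : Fin m → Set (partialDuplicate X) := fun i => {p | p.1.1 ∈ V i} ∩ U i with hW
  have hbase : ∀ y, base y ∈ ⋃ i, W i := fun y => by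
    obtain ⟨i, hi⟩ := Set.mem_iUnion.1 (hVc ▸ Set.mem_univ y)
    exact Set.mem_iUnion.2 ⟨i, hi, (hV i).2 hi⟩
  have hR : ∀ p ∉ ⋃ i, W i, ∃ x, p = iso x := fun p hp =>
    (eq_base_or_eq_iso p).resolve_left fun h => hp (h ▸ hbase _)
  refine ⟨fun i => W i ∪ {p | p ∉ ⋃ i, W i ∧ a p = i}, fun i => ⟨?_, ?_⟩, ?_, fun p => ?_⟩
  · refine (((hV i).1.preimage (by fun_prop)).inter (hU i)).union ?_
    refine isOpen_iff_mem_nhds.2 fun p hp => ?_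
    obtain ⟨x, rfl⟩ := hR p hp.1
    exact Filter.mem_of_superset ((isOpen_singleton_iso x).mem_nhds rfl)
      (Set.singleton_subset_iff.2 hp)
  · rintro p (hp | ⟨-, rfl⟩)
    · exact hp.2
    · exact ha p
  · refine Set.eq_univ_of_forall fun p => ?_
    by_cases hp : p ∈ ⋃ i, W i
    · obtain ⟨i, hi⟩ := Set.mem_iUnion.1 hp
      exact Set.mem_iUnion.2 ⟨i, Or.inl hi⟩
    · exact Set.mem_iUnion.2 ⟨a p, Or.inr ⟨hp, rfl⟩⟩
  · by_cases hp : p ∈ ⋃ i, W i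
    · refine (Set.ncard_le_ncard (fun i hi => ?_) (Set.toFinite _)).trans (hVn p.1.1)
      exact (hi.resolve_right fun h => h.1 hp).1
    · refine (Set.ncard_le_ncard (t := {a p}) (fun i hi => ?_) (Set.toFinite _)).trans (by simp)
      exact (hi.resolve_left fun h => hp (Set.mem_iUnion.2 ⟨i, h⟩)).2.symm

/-- The map to `ℓ₂` sending a point of the cube to its coordinates, with an extra coordinate
for each isolated point. -/
noncomputable def toLp (p : partialDuplicate X) : lp (fun _ : Fin n ⊕ X => ℝ) 2 :=
  open Classical in
  ∑ i, lp.single 2 (Sum.inl i) (p.1.1 i : ℝ) +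
    if h : ∃ x, p.1.2 x = true then lp.single 2 (Sum.inr h.choose) 1 else 0

lemma toLp_inl (p : partialDuplicate X) (i : Fin n) : toLp p (Sum.inl i) = p.1.1 i := by
  classical
  unfold toLp
  rw [lp.coeFn_add, Pi.add_apply, lp_sum_apply]
  split_ifs <;> simp [Pi.single_apply]

lemma toLp_inr (p : partialDuplicate X) (x : X) :
    toLp p (Sum.inr x) = if p.1.2 x = true then 1 else 0 := by
  classical
  unfold toLp
  rw [lp.coeFn_add, Pi.add_apply, lp_sum_apply]
  split_ifs with h hx hx
  · have hxx : h.choose = x := Subtype.ext ((p.2 _ h.choose_spec).symm.trans (p.2 _ hx))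
    simp [hxx]
  · have hxx : x ≠ h.choose := fun hxx => hx (hxx ▸ h.choose_spec)
    simp [hxx]
  · exact absurd ⟨x, hx⟩ h
  · simp

lemma norm_toLp_le (p : partialDuplicate X) : ‖toLp p‖ ≤ n + 1 := by
  classical
  refine (norm_add_le _ _).trans (add_le_add ?_ ?_)
  · refine (norm_sum_le _ _).trans ((Finset.sum_le_card_nsmul _ _ 1 fun i _ => ?_).trans (by simp))
    rw [lp.norm_single (by norm_num), Real.norm_eq_abs, abs_of_nonneg (p.1.1 i).2.1]
    exact (p.1.1 i).2.2
  · split_ifs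
    · rw [lp.norm_single (by norm_num), norm_one]
    · simp

lemma continuous_toLp_apply (c : Fin n ⊕ X) :
    Continuous fun p : partialDuplicate X => toLp p c := by
  rcases c with i | x
  · simp only [toLp_inl]
    fun_prop
  · simp only [toLp_inr]
    exact (continuous_of_discreteTopology (f := fun b : Bool => if b = true then (1 : ℝ) else 0)).comp
      (by fun_prop : Continuous fun p : partialDuplicate X => p.1.2 x)

end partialDuplicate

/-- A bounded, coordinatewise continuous map to `ℓ₂` is weakly continuous. -/
lemma continuous_toWeakSpace_of_bounded {K Γ : Type*} [TopologicalSpace K]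
    (F : K → lp (fun _ : Γ => ℝ) 2) (R : ℝ) (hR : ∀ p, ‖F p‖ ≤ R)
    (hF : ∀ c, Continuous fun p => F p c) :
    Continuous fun p => toWeakSpace ℝ (lp (fun _ : Γ => ℝ) 2) (F p) := by
  classical
  refine WeakBilin.continuous_of_continuous_eval _ fun φ => ?_
  change Continuous fun p => φ (F p)
  set v := (InnerProductSpace.toDual ℝ (lp (fun _ : Γ => ℝ) 2)).symm φ
  have hφ : ∀ w, φ w = inner ℝ v w := fun w => by simp [v]
  simp only [hφ]
  refine continuous_of_uniform_approx_of_continuous fun u hu => ?_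
  obtain ⟨ε, hε, hu⟩ := Metric.mem_uniformity_dist.1 hu
  have hR' : 0 < |R| + 1 := by positivity
  obtain ⟨S, hS⟩ := ((Metric.tendsto_nhds.1 (lp.hasSum_single ENNReal.ofNat_ne_top v)) _
    (div_pos hε hR')).exists
  refine ⟨fun p => inner ℝ (∑ c ∈ S, lp.single 2 c (v c)) (F p), ?_, fun p => hu ?_⟩
  · simp only [sum_inner, lp.inner_single_left]
    exact continuous_finsetSum _ fun c _ => continuous_const.inner (hF c)
  · rw [Real.dist_eq, ← inner_sub_left, ← Real.norm_eq_abs]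
    refine (norm_inner_le_norm _ _).trans_lt ?_
    rw [dist_comm, dist_eq_norm, lt_div_iff₀ hR'] at hS
    refine lt_of_le_of_lt ?_ hS
    gcongr
    exact (hR p).trans ((le_abs_self R).trans (by linarith))

lemma partialDuplicate.isUniformEberlein {n : ℕ} (X : Set (Cube n)) :
    IsUniformEberlein (partialDuplicate X) := by
  refine ⟨inferInstance, Fin n ⊕ X, fun p => toWeakSpace ℝ _ (toLp p), ?_⟩
  refine (Continuous.isClosedEmbedding (continuous_toWeakSpace_of_bounded _ _ norm_toLp_le
    continuous_toLp_apply) fun p q h => ?_).isEmbedding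
  have h' : toLp p = toLp q := (toWeakSpace ℝ _).injective h
  refine Subtype.ext (Prod.ext (funext fun i => Subtype.ext ?_) (funext fun x => ?_))
  · rw [← toLp_inl, ← toLp_inl, h']
  · have := toLp_inr p x
    rw [h', toLp_inr] at this
    cases hp : p.1.2 x <;> cases hq : q.1.2 x <;> simp [hp, hq] at this ⊢

lemma tweight_le {Z : Type*} [TopologicalSpace Z] {B : Set (Set Z)}
    (hB : TopologicalSpace.IsTopologicalBasis B) : tweight Z ≤ Cardinal.mk B :=
  csInf_le' ⟨B, hB, rfl⟩

lemma tweight_le_of_eq_generateFrom {Z : Type*} [t : TopologicalSpace Z] {S : Set (Set Z)}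
    (hS : t = TopologicalSpace.generateFrom S) :
    tweight Z ≤ max Cardinal.aleph0 (Cardinal.mk S) := by
  refine (tweight_le (TopologicalSpace.isTopologicalBasis_of_subbasis hS)).trans ?_
  have hsub : (fun f => ⋂₀ f) '' {f : Set (Set Z) | f.Finite ∧ f ⊆ S} ⊆
      Set.range fun F : Finset S => ⋂₀ (Subtype.val '' (F : Set S)) := by
    rintro _ ⟨f, ⟨hf, hfS⟩, rfl⟩
    lift f to Set S using hfS
    exact ⟨(hf.of_finite_image Subtype.val_injective.injOn).toFinset, by simp⟩
  refine (Cardinal.mk_le_mk_of_subset hsub).trans (Cardinal.mk_range_le.trans ?_)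
  cases finite_or_infinite S
  · exact (Cardinal.lt_aleph0_of_finite _).le.trans (le_max_left _ _)
  · exact (Cardinal.mk_finset_of_infinite S).le.trans (le_max_right _ _)

lemma le_tweight_of_isOpen_singleton {Z X : Type} [TopologicalSpace Z] {f : X → Z}
    (hf : Function.Injective f) (ho : ∀ x, IsOpen {f x}) : Cardinal.mk X ≤ tweight Z := by
  refine le_csInf ⟨_, _, TopologicalSpace.isTopologicalBasis_opens, rfl⟩ ?_
  rintro _ ⟨B, hB, rfl⟩
  have hmem : ∀ x, {f x} ∈ B := fun x => by
    obtain ⟨v, hv, hxv, hvx⟩ := hB.exists_subset_of_mem_open (Set.mem_singleton (f x)) (ho x)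
    rwa [← Set.Subset.antisymm hvx (Set.singleton_subset_iff.2 hxv)]
  exact Cardinal.mk_le_of_injective (f := fun x => (⟨{f x}, hmem x⟩ : B)) fun x y h =>
    hf (Set.singleton_injective (congrArg Subtype.val h))

namespace partialDuplicate

variable {n : ℕ} {X : Set (Cube n)}

lemma tweight_le_of_isInducing {Z : Type} [t : TopologicalSpace Z] {g : Z → partialDuplicate X}
    (hg : Topology.IsInducing g) :
    tweight Z ≤ max Cardinal.aleph0 (Cardinal.mk {x | iso x ∈ Set.range g}) := by
  set A : Set X := {x | iso x ∈ Set.range g} with hA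
  set S₁ : Set (Set Z) :=
    (fun V => {z | (g z).1.1 ∈ V}) '' TopologicalSpace.countableBasis (Cube n) with hS₁
  set S₂ : Set (Set Z) := Set.range fun q : A × Bool => {z | (g z).1.2 q.1 = q.2} with hS₂
  have hgen : t = TopologicalSpace.generateFrom (S₁ ∪ S₂) := by
    refine le_antisymm (le_generateFrom ?_) ?_
    · rintro _ (⟨V, hV, rfl⟩ | ⟨⟨x, b⟩, rfl⟩)
      · exact (TopologicalSpace.isOpen_of_mem_countableBasis hV).preimage
          (by fun_prop : Continuous fun p : partialDuplicate X => p.1.1) |>.preimage hg.continuous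
      · exact ((isOpen_discrete {b}).preimage
          (by fun_prop : Continuous fun p : partialDuplicate X => p.1.2 x)).preimage hg.continuous
    · rw [hg.eq_induced, ← continuous_iff_le_induced]
      let := TopologicalSpace.generateFrom (S₁ ∪ S₂)
      refine Continuous.subtype_mk (Continuous.prodMk ?_ (continuous_pi fun x => ?_))
        fun z => (g z).2
      · refine (TopologicalSpace.isBasis_countableBasis (Cube n)).continuous_iff.2 fun V hV => ?_
        exact TopologicalSpace.isOpen_generateFrom_of_mem (Or.inl ⟨V, hV, rfl⟩)
      · by_cases hx : x ∈ A
        · refine continuous_discrete_rng.2 fun b => ?_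
          exact TopologicalSpace.isOpen_generateFrom_of_mem (Or.inr ⟨(⟨x, hx⟩, b), rfl⟩)
        · refine continuous_const.congr (fun z => ?_ : ∀ z, false = (g z).1.2 x)
          by_contra h
          exact hx ⟨z, eq_iso (by simpa using Ne.symm h)⟩
  refine (tweight_le_of_eq_generateFrom hgen).trans (max_le (le_max_left _ _) ?_)
  have h₁ : Cardinal.mk S₁ ≤ max Cardinal.aleph0 (Cardinal.mk A) :=
    (((TopologicalSpace.countable_countableBasis (Cube n)).image _).le_aleph0).trans
      (le_max_left _ _)
  have h₂ : Cardinal.mk S₂ ≤ max Cardinal.aleph0 (Cardinal.mk A) := by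
    refine Cardinal.mk_range_le.trans ?_
    rw [Cardinal.mk_prod, Cardinal.lift_id, Cardinal.lift_id]
    refine (Cardinal.mul_le_max _ _).trans ?_
    refine max_le (max_le (le_max_right _ _) ?_) (le_max_left _ _)
    exact (Cardinal.lt_aleph0_of_finite Bool).le.trans (le_max_left _ _)
  exact (Cardinal.mk_union_le _ _).trans
    (Cardinal.add_le_of_le (le_max_left _ _) h₁ h₂)

lemma tweight_eq (hX : Cardinal.aleph0 ≤ Cardinal.mk X) :
    tweight (partialDuplicate X) = Cardinal.mk X :=
  le_antisymm ((tweight_le_of_isInducing Topology.IsInducing.id).trans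
    (max_le hX (Cardinal.mk_set_le _)))
    (le_tweight_of_isOpen_singleton iso_injective isOpen_singleton_iso)

end partialDuplicate

lemma frequently_mem_of_mem_interior_closure {Y : Type*} [TopologicalSpace Y]
    [T1Space Y] {y : Y} [(nhdsWithin y {y}ᶜ).NeBot] {A : Set Y} (hy : y ∈ interior (closure A)) :
    ∃ᶠ a in nhdsWithin y {y}ᶜ, a ∈ A := by
  intro h
  obtain ⟨V, hVo, hyV, hV⟩ := mem_nhdsWithin.1 h
  have hmem : V ∩ interior (closure A) ∩ {y}ᶜ ∈ nhdsWithin y {y}ᶜ :=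
    Filter.inter_mem (mem_nhdsWithin_of_mem_nhds
      ((hVo.inter isOpen_interior).mem_nhds ⟨hyV, hy⟩)) self_mem_nhdsWithin
  obtain ⟨z, hz⟩ := Filter.nonempty_of_mem hmem
  obtain ⟨a, ha, haA⟩ := mem_closure_iff.1 (interior_subset hz.1.2) _
    ((hVo.inter isOpen_interior).inter isOpen_compl_singleton) hz
  exact hV ⟨ha.1.1, ha.2⟩ haA

/-- Every nonempty open subset of the cube contains a copy of the cube. -/
lemma exists_continuous_injective_cube {n : ℕ} {U : Set (Cube n)} (hU : IsOpen U)
    (hne : U.Nonempty) :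
    ∃ φ : Cube n → Cube n, Continuous φ ∧ Function.Injective φ ∧ ∀ y, φ y ∈ U := by
  obtain ⟨p, hp⟩ := hne
  obtain ⟨ε, hε, hball⟩ := Metric.isOpen_iff.1 hU p hp
  set t : ℝ := min (ε / 2) 1 with ht
  have ht0 : 0 < t := lt_min (half_pos hε) one_pos
  have ht1 : t ≤ 1 := min_le_right _ _
  have htε : t < ε := (min_le_left _ _).trans_lt (half_lt_self hε)
  have hmem : ∀ (y : Cube n) i, (1 - t) * (p i : ℝ) + t * y i ∈ Set.Icc (0 : ℝ) 1 := fun y i =>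
    convex_Icc (0 : ℝ) 1 (p i).2 (y i).2 (by linarith) ht0.le (by ring)
  refine ⟨fun y i => ⟨_, hmem y i⟩, by fun_prop, fun y z h => ?_, fun y => hball ?_⟩
  · refine funext fun i => Subtype.ext ?_
    have := congrArg Subtype.val (congrFun h i)
    simpa [ht0.ne'] using this
  · refine (dist_pi_lt_iff hε).2 fun i => lt_of_le_of_lt ?_ htε
    rw [Subtype.dist_eq, Real.dist_eq, abs_le]
    have h1 := (p i).2
    have h2 := (y i).2
    simp only [Set.mem_Icc] at h1 h2
    constructor <;> nlinarith

lemma not_isZeroDim_of_continuous_injective {n : ℕ} (hn : 1 ≤ n) {Z : Type*} [TopologicalSpace Z]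
    [T1Space Z] {e : Cube n → Z} (he : Continuous e) (hinj : Function.Injective e) :
    ¬ IsZeroDim Z := by
  rintro ⟨B, hB, hbasis⟩
  have : Nonempty (Fin n) := ⟨⟨0, hn⟩⟩
  obtain ⟨y, z, hyz⟩ := exists_pair_ne (Cube n)
  obtain ⟨V, hVB, hyV, hV⟩ := hbasis.exists_subset_of_mem_open
    (show e y ∈ ({e z}ᶜ : Set Z) from fun h => hyz (hinj h)) isOpen_compl_singleton
  rcases isClopen_iff.1 ((hB V hVB).preimage he) with h | h
  · exact Set.notMem_empty y (h ▸ hyV)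
  · exact hV (h ▸ Set.mem_univ z : z ∈ e ⁻¹' V) rfl

lemma partialDuplicate.exists_cube {n : ℕ} (hn : 1 ≤ n) {X : Set (Cube n)} {κ : Cardinal}
    (hκ : Cardinal.aleph0 < κ)
    (hX : ∀ A : Set (Cube n), IsMeagre A → Cardinal.mk ↥(A ∩ X) < κ)
    {L : Set (partialDuplicate X)} (hL : IsClosed L) (hκL : κ ≤ tweight L) :
    ∃ e : Cube n → L, Topology.IsClosedEmbedding e := by
  have : Nonempty (Fin n) := ⟨⟨0, hn⟩⟩
  set A : Set X := {x | iso x ∈ L} with hA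
  have hκA : κ ≤ Cardinal.mk A := by
    have h := hκL.trans (tweight_le_of_isInducing Topology.IsInducing.subtypeVal)
    rw [Subtype.range_coe] at h
    exact (le_max_iff.1 h).resolve_left (not_le.2 hκ)
  have hA' : ¬ IsNowhereDense (Subtype.val '' A) := fun h => by
    refine (hX _ h.isMeagre).not_ge (hκA.trans ?_)
    rw [Set.inter_eq_left.2 (Subtype.coe_image_subset X A),
      Cardinal.mk_image_eq Subtype.val_injective]
  obtain ⟨φ, hφ, hφinj, hφU⟩ := exists_continuous_injective_cube
    isOpen_interior (Set.nonempty_iff_ne_empty.2 hA')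
  have hbase : ∀ y ∈ interior (closure (Subtype.val '' A)), base y ∈ L := fun y hy => by
    refine hL.mem_of_frequently_of_tendsto ?_ (tendsto_iso y)
    refine Filter.frequently_comap.2
      ((frequently_mem_of_mem_interior_closure hy).mono ?_)
    rintro _ ⟨x, hx, rfl⟩
    exact ⟨x, rfl, hx⟩
  exact ⟨fun y => ⟨base (φ y), hbase _ (hφU y)⟩,
    Continuous.isClosedEmbedding ((continuous_base.comp hφ).subtype_mk _) fun y z h =>
      hφinj (base_injective (congrArg Subtype.val h))⟩

/-- from a `(λ,κ)`-Luzin set in `[0,1]^n` one obtains an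
`n`-dimensional uniform Eberlein compact space of weight `λ` all of whose
closed subspaces of weight `≥ κ` have covering dimension `n`; in particular it
has no closed zero-dimensional subspace of weight `≥ κ`. -/
theorem luzin_eberlein_no_zerodim {n : ℕ} (hn : 1 ≤ n) {κ lam : Cardinal}
    (hκ : Cardinal.aleph0 < κ) (hκlam : κ ≤ lam)
    (hLuzin : ∃ X : Set (Cube n), Cardinal.mk X = lam ∧
      ∀ A : Set (Cube n), IsMeagre A → Cardinal.mk ↥(A ∩ X) < κ) :
    ∃ (K : Type) (tK : TopologicalSpace K), CompactSpace K ∧ IsUniformEberlein K ∧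
      tweight K = lam ∧ HasCovDim K n ∧
      (∀ L : Set K, IsClosed L → κ ≤ tweight ↥L → HasCovDim ↥L n) ∧
      (∀ L : Set K, IsClosed L → κ ≤ tweight ↥L → ¬ IsZeroDim ↥L) := by
  obtain ⟨X, rfl, hX⟩ := hLuzin
  have hdim : ∀ L : Set (partialDuplicate X), IsClosed L → κ ≤ tweight ↥L → HasCovDim ↥L n := by
    intro L hL hκL
    obtain ⟨e, he⟩ := partialDuplicate.exists_cube hn hκ hX hL hκL
    exact ⟨partialDuplicate.covDimLE.of_isClosedEmbedding hL.isClosedEmbedding_subtypeVal,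
      fun m hm => le_of_covDimLE_cube (hm.of_isClosedEmbedding he)⟩
  refine ⟨partialDuplicate X, inferInstance, inferInstance, partialDuplicate.isUniformEberlein X,
    partialDuplicate.tweight_eq (hκ.le.trans hκlam), ⟨partialDuplicate.covDimLE, fun m hm => ?_⟩,
    hdim, fun L hL hκL => ?_⟩
  · exact le_of_covDimLE_cube (hm.of_isClosedEmbedding
      (partialDuplicate.continuous_base.isClosedEmbedding partialDuplicate.base_injective))
  · obtain ⟨e, he⟩ := partialDuplicate.exists_cube hn hκ hX hL hκL
    exact not_isZeroDim_of_continuous_injective hn he.continuous he.injective
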